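/- arXiv:2506.11872 — 2 statements merged into one kernel-verified Lean document; each statement's English description precedes it below -/
import Mathlib

section
/- Let X be a real Banach space having property (E) and let Y ⊆ X* be a norming norm-closed linear subspace. Let M : Σ → b(X) be a set-valued map defined on a σ-algebra Σ such that: (i) M(A) is relatively σ(X,Y)-compact for every A ∈ Σ; and (ii) the support map s(x*,M) is countably additive for every x* ∈ Y. Then the set ⋃_{A∈Σ} M(A) is relatively σ(X,Y)-compact. -/
/-! Write `R = ⋃ M(A)`. Every `s(f, M)` with `f ∈ Y` is a finite signed measure, so `R` is pointwise
bounded on `Y` and, by Banach–Steinhaus, uniformly bounded on the unit ball of `Y`. Embed `X` in `ℝ^Y`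
by evaluation (`evalMap`): the closure of the image of `R` is compact by Tychonoff, and it remains to
show that each of its points `φ` is the evaluation at a point of `X`.

Such a `φ` is a bounded linear functional on `Y`, the limit of points of `R` along an ultrafilter `U`.
By a Grothendieck-type argument relying on property (E) (`exists_eq_eval_of_no_null_sequence`), it is an
evaluation unless some weak*-null sequence `f n` in the unit ball of `Y` satisfies `φ (f n) ≥ ε > 0` for
all `n`.

This is excluded by `no_null_sequence`. Let `ρ` be a finite measure dominating all the measures
`s(± f n, M)`. For `x ∈ R` choose `A x` with `x ∈ M (A x)`, and let `0 ≤ h ≤ 1` be the weak limit in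
`L²(ρ)` of the indicators of `A x` along `U`. For a convex combination `g` of the `f n`, the inequality
`g x ≤ s(g, M)(A x)` passes to the limit as `φ g ≤ ∫ h d s(g, M)`, and approximating `h` by its layers
bounds this by `(1/m) ∑ s(g, M {h ≥ k/m}) + 2 C / m`. The finitely many sets `M {h ≥ k/m}` are relatively
compact, so a one-sided Mazur lemma (`exists_convexHull_lt`) provides a `g` for which every summand is at
most `ε / 2`, and large `m` contradicts `φ g ≥ ε`. -/

/-- The topology `σ(X, Y)` of pointwise convergence on a set `Y ⊆ X*`. -/
def sigmaTop {X : Type*} [NormedAddCommGroup X] [NormedSpace ℝ X]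
    (Y : Set (X →L[ℝ] ℝ)) : TopologicalSpace X :=
  TopologicalSpace.induced (fun x => fun y : Y => (y : X →L[ℝ] ℝ) x) Pi.topologicalSpace

/-- The weak* topology on `X*`: pointwise convergence on `X`. -/
def weakStarTop (X : Type*) [NormedAddCommGroup X] [NormedSpace ℝ X] :
    TopologicalSpace (X →L[ℝ] ℝ) :=
  TopologicalSpace.induced (fun f : X →L[ℝ] ℝ => fun x : X => f x) Pi.topologicalSpace

/-- Property (E) of Efremov: every point of the weak*-closure of a convex bounded set
`C ⊆ X*` is the weak* limit of a sequence from `C`. -/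
def PropertyE (X : Type*) [NormedAddCommGroup X] [NormedSpace ℝ X] : Prop :=
  ∀ C : Set (X →L[ℝ] ℝ), Convex ℝ C → Bornology.IsBounded C →
    ∀ f : X →L[ℝ] ℝ, f ∈ @closure (X →L[ℝ] ℝ) (weakStarTop X) C →
      ∃ g : ℕ → X →L[ℝ] ℝ, (∀ n, g n ∈ C) ∧
        ∀ x : X, Filter.Tendsto (fun n => g n x) Filter.atTop (nhds (f x))

/-- A linear subspace `Y ⊆ X*` is norming: `x ↦ sup {|x*(x)| : x* ∈ Y, ‖x*‖ ≤ 1}` is an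
equivalent norm on `X`. -/
def IsNorming {X : Type*} [NormedAddCommGroup X] [NormedSpace ℝ X]
    (Y : Submodule ℝ (X →L[ℝ] ℝ)) : Prop :=
  ∃ c : ℝ, 0 < c ∧ ∀ x : X,
    c * ‖x‖ ≤ sSup ((fun f : X →L[ℝ] ℝ => |f x|) ''
      ((Y : Set (X →L[ℝ] ℝ)) ∩ Metric.closedBall 0 1))

/-- The support functional `s(x*, C) = sup x*(C)`. -/
noncomputable def supportFn {X : Type*} [NormedAddCommGroup X] [NormedSpace ℝ X]
    (f : X →L[ℝ] ℝ) (C : Set X) : ℝ := sSup (f '' C)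

/-- A set function on a σ-algebra, with values in a topological abelian monoid, is
countably additive. -/
def CountablyAdditive {Ω E : Type*} [MeasurableSpace Ω] [AddCommMonoid E]
    [TopologicalSpace E] (ν : Set Ω → E) : Prop :=
  ∀ A : ℕ → Set Ω, (∀ n, MeasurableSet (A n)) → Pairwise (Function.onFun Disjoint A) →
    HasSum (fun n => ν (A n)) (ν (⋃ n, A n))

open MeasureTheory Filter Topology

/-! ### A one-sided Mazur lemma -/

/-- One-sided Mazur lemma: a bounded sequence in `C(K)` converging pointwise to `0` has convex
combinations with arbitrarily small supremum. Otherwise the convex hull is separated from the open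
convex set `{u < δ}` by a functional, which is then positive, hence integration against a finite
measure, and dominated convergence gives a contradiction. -/
theorem exists_convexHull_lt {K : Type*} [TopologicalSpace K] [CompactSpace K] [T2Space K]
    (F : ℕ → C(K, ℝ)) (C : ℝ) (hC : ∀ n x, |F n x| ≤ C)
    (h0 : ∀ x, Tendsto (fun n => F n x) atTop (𝓝 0)) {δ : ℝ} (hδ : 0 < δ) :
    ∃ g ∈ convexHull ℝ (Set.range F), ∀ x, g x < δ := by
  by_contra hcon
  push Not at hcon
  have hopen : IsOpen {u : C(K, ℝ) | ∀ x, u x < δ} := by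
    have := ContinuousMap.isOpen_setOfPred_mapsTo (X := K) (Y := ℝ) isCompact_univ
      (isOpen_Iio (a := δ))
    simpa [Set.MapsTo] using this
  have hconv : Convex ℝ {u : C(K, ℝ) | ∀ x, u x < δ} := by
    intro u hu v hv a b ha hb hab x
    exact (convex_Iio δ) (hu x) (hv x) ha hb hab
  obtain ⟨Λ, c, h1, h2⟩ := geometric_hahn_banach_open hconv hopen
    (convex_convexHull ℝ (Set.range F)) (by
      rw [Set.disjoint_left]
      intro u hu hu'
      obtain ⟨x, hx⟩ := hcon u hu'
      exact absurd (hu x) (not_lt.2 hx))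
  have hcpos : 0 < c := by simpa using h1 0 (by intro x; simpa using hδ)
  -- `Λ` is bounded above by `c` on the cone of nonpositive functions, hence positive
  have hpos : ∀ u : C(K, ℝ), 0 ≤ u → 0 ≤ Λ u := by
    intro u hu
    by_contra hlt
    push Not at hlt
    have hx : ∀ x, 0 ≤ u x := fun x => hu x
    have h3 := h1 ((c / Λ u) • u) (by
      intro x
      have : c / Λ u ≤ 0 := div_nonpos_of_nonneg_of_nonpos hcpos.le hlt.le
      have := mul_nonpos_of_nonpos_of_nonneg this (hx x)
      simp only [ContinuousMap.smul_apply, smul_eq_mul]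
      linarith)
    rw [map_smul, smul_eq_mul, div_mul_cancel₀ _ hlt.ne] at h3
    exact lt_irrefl _ h3
  let : MeasurableSpace K := borel K
  have : BorelSpace K := ⟨rfl⟩
  let Λ₀ : CompactlySupportedContinuousMap K ℝ →ₗ[ℝ] ℝ :=
    { toFun := fun f => Λ f.toContinuousMap
      map_add' := fun f g => by
        rw [← map_add]; rfl
      map_smul' := fun r f => by
        rw [RingHom.id_apply, ← map_smul]; rfl }
  let Λ' := PositiveLinearMap.mk₀ Λ₀ (fun f hf => hpos _ (fun x => CompactlySupportedContinuousMap.le_def.1 hf x))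
  have hΛint : ∀ f : C(K, ℝ), ∫ x, f x ∂(RealRMK.rieszMeasure Λ') = Λ f := fun f =>
    RealRMK.integral_rieszMeasure Λ' (CompactlySupportedContinuousMap.continuousMapEquiv f)
  have : IsFiniteMeasure (RealRMK.rieszMeasure Λ') := ⟨isCompact_univ.measure_lt_top⟩
  have hlim : Tendsto (fun n => ∫ x, F n x ∂(RealRMK.rieszMeasure Λ')) atTop
      (𝓝 (∫ _, (0 : ℝ) ∂(RealRMK.rieszMeasure Λ'))) :=
    tendsto_integral_of_dominated_convergence (fun _ => C)
      (fun n => (F n).continuous.aestronglyMeasurable) (integrable_const C)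
      (fun n => ae_of_all _ (fun x => hC n x)) (ae_of_all _ h0)
  rw [integral_zero] at hlim
  have := ge_of_tendsto hlim (Eventually.of_forall fun n => by
    rw [hΛint]; exact h2 _ (subset_convexHull ℝ _ ⟨n, rfl⟩))
  linarith

/-! ### Measure-theoretic tools -/

theorem exists_dominating {Ω : Type*} [MeasurableSpace Ω] (μ : ℕ → Measure Ω)
    [∀ n, IsFiniteMeasure (μ n)] :
    ∃ ρ : Measure Ω, IsFiniteMeasure ρ ∧
      ∀ n, ∃ c : ℝ, 0 ≤ c ∧ ∀ B, (μ n).real B ≤ c * ρ.real B := by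
  obtain ⟨a, ha, hs⟩ := ENNReal.exists_pos_tsum_mul_lt_of_countable (one_ne_zero)
    (fun n => μ n Set.univ) (fun n => measure_ne_top _ _)
  have hfin : IsFiniteMeasure (Measure.sum fun n => a n • μ n) := by
    refine ⟨?_⟩
    rw [Measure.sum_apply _ MeasurableSet.univ]
    refine lt_trans ?_ ENNReal.one_lt_top
    refine lt_of_eq_of_lt (tsum_congr fun n => ?_) hs
    rw [Measure.smul_apply, ENNReal.smul_def, smul_eq_mul, mul_comm]
  refine ⟨Measure.sum fun n => a n • μ n, hfin, fun n => ⟨(a n : ℝ)⁻¹, by positivity, fun B => ?_⟩⟩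
  have h1 : (a n • μ n) B ≤ (Measure.sum fun n => a n • μ n) B := Measure.le_sum _ n B
  have h2 := ENNReal.toReal_mono (measure_ne_top _ _) h1
  have h3 : ((a n • μ n) B).toReal = a n * (μ n).real B := by
    rw [Measure.smul_apply, ENNReal.smul_def, smul_eq_mul, ENNReal.toReal_mul]
    rfl
  rw [h3] at h2
  rw [inv_mul_eq_div, le_div_iff₀ (by exact_mod_cast ha n), mul_comm]
  exact h2

/-- The Radon–Nikodym density of `ν` is bounded by `c`, so it is square integrable. -/
theorem exists_density {Ω : Type*} [MeasurableSpace Ω] (ρ : Measure Ω) [IsFiniteMeasure ρ]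
    (ν : SignedMeasure Ω) (c : ℝ) (hc : ∀ B, MeasurableSet B → |ν B| ≤ c * ρ.real B) :
    ∃ p : Ω → ℝ, MemLp p 2 ρ ∧ ∀ B, MeasurableSet B → ν B = ∫ ω in B, p ω ∂ρ := by
  have hac : ν ≪ᵥ ρ.toENNRealVectorMeasure := by
    refine VectorMeasure.AbsolutelyContinuous.mk fun B hB h0 => ?_
    rw [Measure.toENNRealVectorMeasure_apply_measurable hB] at h0
    have := hc B hB
    rw [Measure.real, h0] at this
    simpa using this
  have heq := SignedMeasure.withDensityᵥ_rnDeriv_eq ν ρ hac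
  have hpint : Integrable (ν.rnDeriv ρ) ρ := SignedMeasure.integrable_rnDeriv ν ρ
  have hden : ∀ B, MeasurableSet B → ν B = ∫ ω in B, ν.rnDeriv ρ ω ∂ρ := by
    intro B hB
    conv_lhs => rw [← heq]
    exact withDensityᵥ_apply hpint hB
  refine ⟨ν.rnDeriv ρ, ?_, hden⟩
  have hle : ν.rnDeriv ρ ≤ᵐ[ρ] fun _ => c :=
    ae_le_of_forall_setIntegral_le hpint (integrable_const c) fun B hB _ => by
      rw [← hden B hB, setIntegral_const, smul_eq_mul, mul_comm]
      exact (abs_le.1 (hc B hB)).2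
  have hge : (fun _ => -c) ≤ᵐ[ρ] ν.rnDeriv ρ :=
    ae_le_of_forall_setIntegral_le (integrable_const _) hpint fun B hB _ => by
      rw [← hden B hB, setIntegral_const, smul_eq_mul]
      have := (abs_le.1 (hc B hB)).1
      linarith
  refine MemLp.of_bound hpint.aestronglyMeasurable c ?_
  filter_upwards [hle, hge] with ω h1 h2
  exact abs_le.2 ⟨h2, h1⟩

/-- Along an ultrafilter the indicators of measurable sets converge weakly in `L²(ρ)` to a function
`h`, by weak compactness of balls; `h` is truncated on a null set so that `0 ≤ h ≤ 1` everywhere. -/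
theorem exists_weak_limit_indicator {Ω T : Type*} [MeasurableSpace Ω] (ρ : Measure Ω)
    [IsFiniteMeasure ρ] (U : Ultrafilter T) (A : T → Set Ω) (hA : ∀ t, MeasurableSet (A t)) :
    ∃ h : Ω → ℝ, Measurable h ∧ (∀ ω, 0 ≤ h ω ∧ h ω ≤ 1) ∧
      ∀ p : Ω → ℝ, MemLp p 2 ρ →
        Tendsto (fun t => ∫ ω in A t, p ω ∂ρ) U (𝓝 (∫ ω, h ω * p ω ∂ρ)) := by
  let e : T → Lp ℝ 2 ρ := fun t => indicatorConstLp 2 (hA t) (measure_ne_top ρ _) (1 : ℝ)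
  let D := InnerProductSpace.toDual ℝ (Lp ℝ 2 ρ)
  obtain ⟨r, hr⟩ : ∃ r : ℝ, ∀ t, ‖e t‖ ≤ r := by
    refine ⟨(ρ.real Set.univ) ^ (1 / (2 : ENNReal).toReal), fun t => ?_⟩
    rw [norm_indicatorConstLp (by norm_num) (by norm_num), norm_one, one_mul]
    exact Real.rpow_le_rpow measureReal_nonneg (measureReal_mono (Set.subset_univ _))
      (by positivity)
  let w : T → WeakDual ℝ (Lp ℝ 2 ρ) := fun t => StrongDual.toWeakDual (D (e t))
  obtain ⟨ψ, -, hψ⟩ := (WeakDual.isCompact_closedBall (𝕜 := ℝ) (E := Lp ℝ 2 ρ) 0 r).ultrafilter_le_nhds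
    (U.map w) (by
      rw [le_principal_iff, Ultrafilter.coe_map, mem_map]
      refine Filter.Eventually.of_forall fun t => ?_
      simp only [w, Set.mem_preimage, Metric.mem_closedBall, dist_zero_right]
      exact (D.norm_map (e t)).trans_le (hr t))
  let h : Lp ℝ 2 ρ := D.symm (WeakDual.toStrongDual ψ)
  have hlim : ∀ p : Ω → ℝ, MemLp p 2 ρ →
        Tendsto (fun t => ∫ ω in A t, p ω ∂ρ) U (𝓝 (∫ ω, h ω * p ω ∂ρ)) := by
    intro p hp
    have h1 : Tendsto (fun t => w t (hp.toLp p)) U (𝓝 (ψ (hp.toLp p))) :=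
      ((WeakDual.eval_continuous (hp.toLp p)).tendsto ψ).comp hψ
    have h2 : ∀ t, w t (hp.toLp p) = ∫ ω in A t, p ω ∂ρ := by
      intro t
      change inner ℝ (e t) (hp.toLp p) = _
      rw [L2.inner_indicatorConstLp_one]
      exact integral_congr_ae (ae_restrict_of_ae hp.coeFn_toLp)
    have h3 : ψ (hp.toLp p) = ∫ ω, h ω * p ω ∂ρ := by
      have : ψ (hp.toLp p) = inner ℝ h (hp.toLp p) :=
        (InnerProductSpace.toDual_symm_apply (y := WeakDual.toStrongDual ψ)).symm
      rw [this, L2.inner_def]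
      refine integral_congr_ae ?_
      filter_upwards [hp.coeFn_toLp] with ω hω
      simp [hω, mul_comm]
    rw [← h3]
    exact h1.congr h2
  have hhint : Integrable h ρ := (Lp.memLp h).integrable (by norm_num)
  have hset : ∀ B, MeasurableSet B →
      Tendsto (fun t => ρ.real (B ∩ A t)) U (𝓝 (∫ ω in B, h ω ∂ρ)) := by
    intro B hB
    have h1 := hlim (B.indicator fun _ => 1)
      (memLp_indicator_const 2 hB 1 (Or.inr (measure_ne_top _ _)))
    have h2 : ∫ ω, h ω * B.indicator (fun _ => (1 : ℝ)) ω ∂ρ = ∫ ω in B, h ω ∂ρ := by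
      rw [← integral_indicator hB]
      congr 1; ext ω
      by_cases hω : ω ∈ B <;> simp [hω]
    rw [h2] at h1
    refine h1.congr fun t => ?_
    rw [setIntegral_indicator hB, setIntegral_const, smul_eq_mul, mul_one, Set.inter_comm]
  have h0 : 0 ≤ᵐ[ρ] h := ae_nonneg_of_forall_setIntegral_nonneg hhint fun B hB _ =>
    ge_of_tendsto (hset B hB) (Eventually.of_forall fun t => measureReal_nonneg)
  have h1 : h ≤ᵐ[ρ] fun _ => 1 :=
    ae_le_of_forall_setIntegral_le hhint (integrable_const 1) fun B hB _ => by
      rw [setIntegral_const, smul_eq_mul, mul_one]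
      exact le_of_tendsto (hset B hB)
        (Eventually.of_forall fun t => measureReal_mono Set.inter_subset_left)
  have hm : Measurable (h : Ω → ℝ) := (Lp.stronglyMeasurable h).measurable
  refine ⟨fun ω => max 0 (min 1 (h ω)), by fun_prop, fun ω => ⟨le_max_left _ _,
    max_le zero_le_one (min_le_left _ _)⟩, fun p hp => ?_⟩
  have : ∫ ω, max 0 (min 1 (h ω)) * p ω ∂ρ = ∫ ω, h ω * p ω ∂ρ := by
    refine integral_congr_ae ?_
    filter_upwards [h0, h1] with ω h0 h1
    have h0' : 0 ≤ h ω := h0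
    simp only [min_eq_right h1, max_eq_right h0']
  rw [this]
  exact hlim p hp

/-- For `t ∈ [0, 1]` the number of `k < m` with `(k + 1) / m ≤ t` is `⌊m t⌋`. -/
theorem abs_sub_layers_le (m : ℕ) (hm : 0 < m) {t : ℝ} (h0 : 0 ≤ t) (h1 : t ≤ 1) :
    |t - (∑ k ∈ Finset.range m, if ((k : ℝ) + 1) / m ≤ t then (1 : ℝ) else 0) / m| ≤ 1 / m := by
  have hm' : (0 : ℝ) < m := by exact_mod_cast hm
  have hfl : ⌊m * t⌋₊ ≤ m := by
    have := Nat.floor_le (a := m * t) (by positivity)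
    have h2 : (⌊m * t⌋₊ : ℝ) ≤ m := this.trans (by nlinarith)
    exact_mod_cast h2
  have hcount : (∑ k ∈ Finset.range m, if ((k : ℝ) + 1) / m ≤ t then (1 : ℝ) else 0)
      = ⌊m * t⌋₊ := by
    rw [Finset.sum_boole]
    congr 1
    have : (Finset.range m).filter (fun k : ℕ => ((k : ℝ) + 1) / m ≤ t) = Finset.range ⌊m * t⌋₊ := by
      ext k
      simp only [Finset.mem_filter, Finset.mem_range]
      rw [div_le_iff₀ hm', mul_comm t, ← Nat.succ_le_iff (m := k) (n := ⌊m * t⌋₊),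
        Nat.le_floor_iff (by positivity)]
      push_cast
      refine ⟨fun h => h.2, fun h => ⟨?_, h⟩⟩
      have h3 : k.succ ≤ ⌊m * t⌋₊ := Nat.le_floor (by push_cast; exact h)
      omega
    rw [this, Finset.card_range]
  rw [hcount]
  have a1 := Nat.floor_le (a := m * t) (by positivity)
  have a2 := Nat.lt_floor_add_one (m * t)
  have : t - (⌊m * t⌋₊ : ℝ) / m = (m * t - ⌊m * t⌋₊) / m := by field_simp
  rw [this, abs_of_nonneg (div_nonneg (by linarith) hm'.le)]
  gcongr
  linarith

/-- Discretised layer-cake estimate: if the signed measure `p ρ` is at most `δ` on the level sets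
`{h ≥ (k + 1) / m}` and its values are bounded by `C`, then the integral of `h` against it is at most
`δ + 2 C / m`. Here `2 C` bounds the total variation of `p ρ`. -/
theorem integral_mul_le_layers {Ω : Type*} [MeasurableSpace Ω] (ρ : Measure Ω)
    [IsFiniteMeasure ρ] {h p : Ω → ℝ} (hh : Measurable h) (h01 : ∀ ω, 0 ≤ h ω ∧ h ω ≤ 1)
    (hp : Integrable p ρ) {C δ : ℝ} (hC : ∀ B, MeasurableSet B → |∫ ω in B, p ω ∂ρ| ≤ C)
    (m : ℕ) (hm : 0 < m)
    (hδ : ∀ k ∈ Finset.range m, ∫ ω in {ω | ((k : ℝ) + 1) / m ≤ h ω}, p ω ∂ρ ≤ δ) :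
    ∫ ω, h ω * p ω ∂ρ ≤ δ + 2 * C / m := by
  have hm' : (0 : ℝ) < m := by exact_mod_cast hm
  let S : ℕ → Set Ω := fun k => {ω | ((k : ℝ) + 1) / m ≤ h ω}
  have hS : ∀ k, MeasurableSet (S k) := fun k => measurableSet_le measurable_const hh
  have habs : ∫ ω, |p ω| ∂ρ ≤ 2 * C := by
    let q := hp.aestronglyMeasurable.mk p
    have hpq : p =ᵐ[ρ] q := hp.aestronglyMeasurable.ae_eq_mk
    have hqm : Measurable q := hp.aestronglyMeasurable.stronglyMeasurable_mk.measurable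
    have hB : MeasurableSet {ω | 0 ≤ q ω} := measurableSet_le measurable_const hqm
    rw [← integral_add_compl hB hp.abs]
    have e1 : ∫ ω in {ω | 0 ≤ q ω}, |p ω| ∂ρ = ∫ ω in {ω | 0 ≤ q ω}, p ω ∂ρ := by
      refine integral_congr_ae ?_
      filter_upwards [ae_restrict_mem hB, ae_restrict_of_ae hpq] with ω hω hq
      rw [hq]; exact abs_of_nonneg hω
    have e2 : ∫ ω in {ω | 0 ≤ q ω}ᶜ, |p ω| ∂ρ = -∫ ω in {ω | 0 ≤ q ω}ᶜ, p ω ∂ρ := by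
      rw [← integral_neg]
      refine integral_congr_ae ?_
      filter_upwards [ae_restrict_mem hB.compl, ae_restrict_of_ae hpq] with ω hω hq
      rw [hq]; exact abs_of_neg (not_le.1 hω)
    have := abs_le.1 (hC _ hB)
    have := abs_le.1 (hC _ hB.compl)
    rw [e1, e2]; linarith
  let H : Ω → ℝ := fun ω => (∑ k ∈ Finset.range m, if ((k : ℝ) + 1) / m ≤ h ω then (1 : ℝ) else 0) / m
  have hHp : ∀ ω, H ω * p ω = (∑ k ∈ Finset.range m, (S k).indicator p ω) / m := by
    intro ω
    simp only [H, div_mul_eq_mul_div, Finset.sum_mul]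
    congr 1
    refine Finset.sum_congr rfl fun k _ => ?_
    simp [S, Set.indicator_apply]
  have hHint : Integrable (fun ω => H ω * p ω) ρ := by
    simp_rw [hHp]
    exact (integrable_finsetSum _ fun k _ => hp.indicator (hS k)).div_const _
  have hHle : ∫ ω, H ω * p ω ∂ρ ≤ δ := by
    simp_rw [hHp]
    rw [integral_div, integral_finsetSum _ fun k _ => hp.indicator (hS k), div_le_iff₀ hm']
    calc _ ≤ ∑ k ∈ Finset.range m, δ := by
          refine Finset.sum_le_sum fun k hk => ?_
          rw [integral_indicator (hS k)]
          exact hδ k hk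
      _ = δ * m := by simp [mul_comm]
  have hpt : ∀ ω, h ω * p ω ≤ H ω * p ω + |p ω| / m := by
    intro ω
    have h1 := abs_sub_layers_le m hm (h01 ω).1 (h01 ω).2
    have h2 : (h ω - H ω) * p ω ≤ 1 / m * |p ω| := by
      refine (le_abs_self _).trans ?_
      rw [abs_mul]
      exact mul_le_mul_of_nonneg_right h1 (abs_nonneg _)
    rw [sub_mul, one_div_mul_eq_div] at h2
    linarith
  have hhp : Integrable (fun ω => h ω * p ω) ρ :=
    hp.bdd_mul hh.aestronglyMeasurable (c := 1) (ae_of_all _ fun ω => by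
      rw [Real.norm_eq_abs, abs_of_nonneg (h01 ω).1]; exact (h01 ω).2)
  calc ∫ ω, h ω * p ω ∂ρ ≤ ∫ ω, (H ω * p ω + |p ω| / m) ∂ρ :=
        integral_mono hhp (hHint.add (hp.abs.div_const _)) hpt
    _ = ∫ ω, H ω * p ω ∂ρ + (∫ ω, |p ω| ∂ρ) / m := by
        rw [integral_add hHint (hp.abs.div_const _), integral_div]
    _ ≤ δ + 2 * C / m := by gcongr

theorem exists_signedMeasure {Ω : Type*} [MeasurableSpace Ω] (ν : Set Ω → ℝ)
    (hν : CountablyAdditive ν) :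
    ∃ σ : SignedMeasure Ω, ∀ B, MeasurableSet B → σ B = ν B := by
  classical
  have hempty : ν ∅ = 0 := by
    have h := hν (fun _ => ∅) (fun _ => MeasurableSet.empty) (fun _ _ _ => by simp [Function.onFun])
    simpa using (summable_const_iff _).1 h.summable
  refine ⟨{ measureOf' := fun B => if MeasurableSet B then ν B else 0
            empty' := by simp [hempty]
            not_measurable' := fun B hB => if_neg hB
            m_iUnion' := fun A hA hd => ?_ }, fun B hB => if_pos hB⟩
  simpa [hA, MeasurableSet.iUnion hA] using hν A hA hd

/-! ### Support functions and evaluation maps -/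

section Support

variable {X : Type*} [NormedAddCommGroup X] [NormedSpace ℝ X]

theorem le_supportFn {S : Set X} (hS : Bornology.IsBounded S) (f : X →L[ℝ] ℝ) {x : X}
    (hx : x ∈ S) : f x ≤ supportFn f S :=
  le_csSup (f.lipschitz.isBounded_image hS).bddAbove ⟨x, hx, rfl⟩

theorem supportFn_le {S : Set X} (hS : S.Nonempty) (f : X →L[ℝ] ℝ) {a : ℝ}
    (h : ∀ x ∈ S, f x ≤ a) : supportFn f S ≤ a :=
  csSup_le (hS.image f) (by rintro _ ⟨x, hx, rfl⟩; exact h x hx)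

theorem supportFn_combo_le {S : Set X} (hS : Bornology.IsBounded S) (hne : S.Nonempty)
    (f g : X →L[ℝ] ℝ) {a b : ℝ} (ha : 0 ≤ a) (hb : 0 ≤ b) :
    supportFn (a • f + b • g) S ≤ a * supportFn f S + b * supportFn g S :=
  supportFn_le hne _ fun x hx => by
    simp only [add_apply, smul_apply, smul_eq_mul]
    exact add_le_add (mul_le_mul_of_nonneg_left (le_supportFn hS f hx) ha)
      (mul_le_mul_of_nonneg_left (le_supportFn hS g hx) hb)

theorem neg_supportFn_neg_le {S : Set X} (hS : Bornology.IsBounded S) (hne : S.Nonempty)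
    (f : X →L[ℝ] ℝ) : -supportFn (-f) S ≤ supportFn f S := by
  obtain ⟨x, hx⟩ := hne
  have h1 := le_supportFn hS f hx
  have h2 := le_supportFn hS (-f) hx
  rw [neg_apply] at h2
  linarith

/-- Evaluation of the points of `X` on a family of functionals `e`, as a map into `ℝ^V`. -/
def evalMap {V : Type*} (e : V → X →L[ℝ] ℝ) : X → V → ℝ := fun x v => e v x

theorem abs_le_of_mem_closure_evalMap {V : Type*} [NormedAddCommGroup V]
    {e : V → X →L[ℝ] ℝ} {S : Set X} {C : ℝ}
    (hS : ∀ x ∈ S, ∀ v, |e v x| ≤ C * ‖v‖) {z : V → ℝ} (hz : z ∈ closure (evalMap e '' S))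
    (v : V) : |z v| ≤ C * ‖v‖ := by
  have hcl : IsClosed {z : V → ℝ | |z v| ≤ C * ‖v‖} :=
    isClosed_le (continuous_apply v).abs continuous_const
  exact closure_minimal (by rintro _ ⟨x, hx, rfl⟩; exact hS x hx v) hcl hz

/-! ### Limit points are continuous along weak*-null sequences -/

/-- A limit point `φ` of `⋃ M(A)`, taken along an ultrafilter `U` on `X`, cannot be bounded below by
`ε > 0` on a weak*-null sequence `f n` in the unit ball of `V`. With `x ∈ M (A x)` and `h` the weak
limit of the indicators of `A x` along `U`, every convex combination `g` of the `f n` satisfies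
`ε ≤ φ g ≤ ∫ h d s(g, M)`; the right-hand side is controlled by `s(g, M B)` for finitely many level
sets `B` of `h`, and Mazur's lemma makes all of these small. -/
theorem no_null_sequence {Ω : Type*} [MeasurableSpace Ω]
    {V : Type*} [NormedAddCommGroup V] [NormedSpace ℝ V] (e : V →ₗᵢ[ℝ] (X →L[ℝ] ℝ))
    (M : Set Ω → Set X)
    (hne : ∀ A : Set Ω, MeasurableSet A → (M A).Nonempty)
    (hbd : ∀ A : Set Ω, MeasurableSet A → Bornology.IsBounded (M A))
    (hcpt : ∀ A : Set Ω, MeasurableSet A →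
      IsCompact (closure (evalMap e '' M A) ∩ Set.range (evalMap e)))
    (hca : ∀ v, CountablyAdditive (fun A => supportFn (e v) (M A)))
    {C : ℝ} (hC0 : 0 ≤ C)
    (hC : ∀ A, MeasurableSet A → ∀ x ∈ M A, ∀ v, |e v x| ≤ C * ‖v‖)
    (U : Ultrafilter X) (hU : (⋃ (A : Set Ω) (_ : MeasurableSet A), M A) ∈ U)
    (φ : V →ₗ[ℝ] ℝ) (hφ : ∀ f : V, Tendsto (fun x => e f x) U (𝓝 (φ f)))
    (f : ℕ → V) (hf1 : ∀ n, ‖f n‖ ≤ 1)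
    (hf0 : ∀ x, Tendsto (fun n => e (f n) x) atTop (𝓝 0))
    {ε : ℝ} (hε : 0 < ε) (hfε : ∀ n, ε ≤ φ (f n)) : False := by
  classical
  choose ν hν using fun g : V => exists_signedMeasure _ (hca g)
  -- a finite measure dominating all the measures `s(± f n, M)`
  obtain ⟨ρ, hρ, hdom⟩ := exists_dominating
    (fun n => (ν (f n)).totalVariation + (ν (-f n)).totalVariation)
  have hconvdom : ∀ g ∈ convexHull ℝ (Set.range f), ∃ c : ℝ, ∀ B, MeasurableSet B →
      supportFn (e g) (M B) ≤ c * ρ.real B ∧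
      supportFn (-e g) (M B) ≤ c * ρ.real B := by
    refine convexHull_min (t := {g : V | ∃ c : ℝ, ∀ B, MeasurableSet B →
      supportFn (e g) (M B) ≤ c * ρ.real B ∧
      supportFn (-e g) (M B) ≤ c * ρ.real B}) ?_ ?_
    · rintro _ ⟨n, rfl⟩
      obtain ⟨c, hc, hcB⟩ := hdom n
      refine ⟨c, fun B hB => ?_⟩
      have h3 := hcB B
      rw [measureReal_add_apply] at h3
      have h1 := (le_abs_self _).trans ((ν (f n)).norm_le_totalVariation B)
      have h2 := (le_abs_self _).trans ((ν (-f n)).norm_le_totalVariation B)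
      rw [hν _ B hB] at h1 h2
      have := measureReal_nonneg (μ := (ν (f n)).totalVariation) (s := B)
      have := measureReal_nonneg (μ := (ν (-f n)).totalVariation) (s := B)
      rw [map_neg] at h2
      constructor <;> linarith
    · rintro g₁ ⟨c₁, h₁⟩ g₂ ⟨c₂, h₂⟩ a b ha hb -
      refine ⟨a * c₁ + b * c₂, fun B hB => ⟨?_, ?_⟩⟩
      · rw [map_add, map_smul, map_smul]
        refine (supportFn_combo_le (hbd B hB) (hne B hB) _ _ ha hb).trans ?_
        have := mul_le_mul_of_nonneg_left (h₁ B hB).1 ha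
        have := mul_le_mul_of_nonneg_left (h₂ B hB).1 hb
        linarith
      · have he : -e (a • g₁ + b • g₂)
            = a • (-e g₁) + b • (-e g₂) := by
          rw [map_add, map_smul, map_smul]; module
        rw [he]
        refine (supportFn_combo_le (hbd B hB) (hne B hB) _ _ ha hb).trans ?_
        have := mul_le_mul_of_nonneg_left (h₁ B hB).2 ha
        have := mul_le_mul_of_nonneg_left (h₂ B hB).2 hb
        linarith
  -- a measurable set `A x` with `x ∈ M (A x)` for `U`-almost all `x`
  have hA : ∀ x : X, ∃ A : Set Ω, MeasurableSet A ∧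
      (x ∈ (⋃ (A : Set Ω) (_ : MeasurableSet A), M A) → x ∈ M A) := by
    intro x
    by_cases hx : x ∈ (⋃ (A : Set Ω) (_ : MeasurableSet A), M A)
    · obtain ⟨A, hA, hxA⟩ := Set.mem_iUnion₂.1 hx
      exact ⟨A, hA, fun _ => hxA⟩
    · exact ⟨∅, MeasurableSet.empty, fun h => absurd h hx⟩
  choose A hAm hA using hA
  obtain ⟨h, hhm, h01, hlim⟩ := exists_weak_limit_indicator ρ U A hAm
  obtain ⟨m, hm⟩ := exists_nat_gt (2 * C / (ε / 2))
  have hm0 : 0 < m := by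
    have : (0 : ℝ) < m := lt_of_le_of_lt (by positivity) hm
    exact_mod_cast this
  let B : ℕ → Set Ω := fun k => {ω | ((k : ℝ) + 1) / m ≤ h ω}
  have hB : ∀ k, MeasurableSet (B k) := fun k => measurableSet_le measurable_const hhm
  -- the compact set on which the convex combination has to be small
  let K : Set (V → ℝ) := ⋃ k ∈ Finset.range m,
    (closure (evalMap e '' M (B k)) ∩ Set.range (evalMap e))
  have hK : IsCompact K := (Finset.range m).isCompact_biUnion fun k _ =>
    hcpt _ (hB k)
  have hKeval : ∀ z ∈ K, ∃ x, evalMap e x = z := by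
    intro z hz
    obtain ⟨k, hk, -, hx⟩ := Set.mem_iUnion₂.1 hz
    exact hx
  have hKbd : ∀ z ∈ K, ∀ g : V, |z g| ≤ C * ‖g‖ := by
    intro z hz g
    obtain ⟨k, hk, hz, -⟩ := Set.mem_iUnion₂.1 hz
    exact abs_le_of_mem_closure_evalMap (hC _ (hB k)) hz g
  have : CompactSpace K := isCompact_iff_compactSpace.1 hK
  let T : V →ₗ[ℝ] C(K, ℝ) :=
    { toFun := fun g => ⟨fun z => z.1 g, (continuous_apply g).comp continuous_subtype_val⟩
      map_add' := fun g₁ g₂ => by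
        ext z
        obtain ⟨x, hx⟩ := hKeval z z.2
        simp [← hx, evalMap]
      map_smul' := fun r g => by
        ext z
        obtain ⟨x, hx⟩ := hKeval z z.2
        simp [← hx, evalMap] }
  obtain ⟨u, hu, huδ⟩ := exists_convexHull_lt (fun n => T (f n)) C
    (fun n z => (hKbd z z.2 (f n)).trans (mul_le_of_le_one_right hC0 (hf1 n)))
    (fun z => by
      obtain ⟨x, hx⟩ := hKeval z z.2
      refine (hf0 x).congr fun n => ?_
      change _ = z.1 (f n)
      rw [← hx]; rfl)
    (half_pos hε)
  have hrange : Set.range (fun n => T (f n)) = T '' Set.range f := by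
    rw [← Set.range_comp]; rfl
  rw [hrange, ← LinearMap.image_convexHull] at hu
  obtain ⟨g, hg, rfl⟩ := hu
  have hg1 : ‖g‖ ≤ 1 := by
    have := convexHull_min (s := Set.range f) (t := Metric.closedBall (0 : V) 1)
      (by rintro _ ⟨n, rfl⟩; simpa using hf1 n) (convex_closedBall _ _) hg
    simpa using this
  have hgε : ε ≤ φ g := by
    refine convexHull_min (s := Set.range f) (t := {g : V | ε ≤ φ g})
      (by rintro _ ⟨n, rfl⟩; exact hfε n) ?_ hg
    exact convex_halfSpace_ge φ.isLinear ε
  obtain ⟨c, hc⟩ := hconvdom g hg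
  obtain ⟨p, hp, hpν⟩ := exists_density ρ (ν g) c fun B hB => by
    rw [hν g B hB, abs_le]
    have := neg_supportFn_neg_le (hbd B hB) (hne B hB) (e g)
    exact ⟨by linarith [(hc B hB).2], (hc B hB).1⟩
  have hle : φ g ≤ ∫ ω, h ω * p ω ∂ρ := by
    refine le_of_tendsto_of_tendsto (hφ g) (hlim p hp) ?_
    filter_upwards [hU] with x hx
    rw [← hpν _ (hAm x), hν g _ (hAm x)]
    exact le_supportFn (hbd _ (hAm x)) _ (hA x hx)
  have hνC : ∀ B, MeasurableSet B → |∫ ω in B, p ω ∂ρ| ≤ C := by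
    intro B hB
    have key : ∀ x ∈ M B, |(e g) x| ≤ C := fun x hx =>
      (hC B hB x hx g).trans (mul_le_of_le_one_right hC0 hg1)
    rw [← hpν B hB, hν g B hB, abs_le]
    refine ⟨?_, supportFn_le (hne B hB) _ fun x hx => (abs_le.1 (key x hx)).2⟩
    obtain ⟨x, hx⟩ := hne B hB
    exact (abs_le.1 (key x hx)).1.trans (le_supportFn (hbd B hB) _ hx)
  have hfin := integral_mul_le_layers ρ hhm h01 (hp.integrable (by norm_num)) hνC m hm0
    (δ := ε / 2) fun k hk => by
      rw [← hpν _ (hB k), hν g _ (hB k)]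
      refine supportFn_le (hne _ (hB k)) _ fun x hx => ?_
      have hxK : evalMap e x ∈ K :=
        Set.mem_biUnion (x := k) hk ⟨subset_closure ⟨x, hx, rfl⟩, x, rfl⟩
      exact (huδ ⟨_, hxK⟩).le
  have : 2 * C / m < ε / 2 := by
    rw [div_lt_iff₀ (by positivity)] at hm
    rw [div_lt_iff₀ (by exact_mod_cast hm0)]
    linarith
  linarith

/-! ### Limit points are evaluations -/

/-- A Grothendieck-type completeness criterion. If `φ₀` is not bounded below on any weak*-null
sequence of the unit ball of `V`, then property (E) makes it small on the part of the ball of `V`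
annihilating a suitable finite `F ⊆ X`; extending its restriction to that annihilator by
Hahn–Banach shows that `φ₀` is close in norm to evaluation at a point of `span F`. The evaluations
form a norm-closed set because `V` is norming (hypothesis `hn`) and `X` is complete. -/
theorem exists_eq_eval_of_no_null_sequence [CompleteSpace X] (hE : PropertyE X)
    {V : Type*} [NormedAddCommGroup V] [NormedSpace ℝ V] (e : V →ₗᵢ[ℝ] (X →L[ℝ] ℝ))
    {c : ℝ} (hc : 0 < c)
    (hn : ∀ x r, 0 ≤ r → (∀ v, |e v x| ≤ r * ‖v‖) → c * ‖x‖ ≤ r)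
    (φ₀ : V →ₗ[ℝ] ℝ) {C : ℝ} (hC : ∀ v, |φ₀ v| ≤ C * ‖v‖)
    (hφ : ∀ f : ℕ → V, (∀ n, ‖f n‖ ≤ 1) →
      (∀ x, Tendsto (fun n => e (f n) x) atTop (𝓝 0)) →
      ∀ ε : ℝ, 0 < ε → (∀ n, ε ≤ φ₀ (f n)) → False) :
    ∃ x : X, ∀ f : V, φ₀ f = e f x := by
  let φ : V →L[ℝ] ℝ := φ₀.mkContinuous C hC
  let J : X →L[ℝ] V →L[ℝ] ℝ := e.toContinuousLinearMap.flip
  have hJ : ∀ x (f : V), J x f = e f x := fun x f => rfl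
  have hclosed : IsClosed (Set.range J) := by
    have hb : ∀ x, c * ‖x‖ ≤ ‖J x‖ := fun x =>
      hn x _ (norm_nonneg _) fun v => (J x).le_opNorm v
    refine AntilipschitzWith.isClosed_range (K := (⟨c, hc.le⟩ : NNReal)⁻¹)
      (J.antilipschitz_of_bound fun x => ?_) J.uniformContinuous
    have h2 : ((⟨c, hc.le⟩ : NNReal)⁻¹ : NNReal) = (c⁻¹ : ℝ) := rfl
    rw [h2, inv_mul_eq_div, le_div_iff₀ hc, mul_comm]
    exact hb x
  suffices hcl : φ ∈ closure (Set.range J) by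
    rw [hclosed.closure_eq] at hcl
    obtain ⟨x, hx⟩ := hcl
    exact ⟨x, fun f => (DFunLike.congr_fun hx f).symm⟩
  rw [Metric.mem_closure_iff]
  intro ε₀ hε₀
  obtain ⟨ε, hε, hεε⟩ := exists_between hε₀
  obtain ⟨F, hF⟩ : ∃ F : Finset X, ∀ f : V, ‖f‖ ≤ 1 →
      (∀ x ∈ F, e f x = 0) → φ f < ε := by
    by_contra hcon
    push Not at hcon
    choose v hv1 hv0 hvε using hcon
    let D : Set (X →L[ℝ] ℝ) := e '' {f : V | ‖f‖ ≤ 1 ∧ ε ≤ φ f}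
    have hD : Convex ℝ D := by
      refine Convex.linear_image ?_ e.toLinearMap
      have h1 : Convex ℝ {f : V | ‖f‖ ≤ 1} := by
        simpa [Metric.closedBall] using convex_closedBall (0 : V) 1
      exact h1.inter (convex_halfSpace_ge φ.toLinearMap.isLinear ε)
    have hDb : Bornology.IsBounded D := by
      refine (Metric.isBounded_closedBall (x := (0 : X →L[ℝ] ℝ)) (r := 1)).subset ?_
      rintro _ ⟨f, hf, rfl⟩
      simpa using hf.1
    have h0 : (0 : X →L[ℝ] ℝ) ∈ @closure _ (weakStarTop X) D := by
      refine @mem_closure_of_tendsto _ (weakStarTop X) _ 0 D (fun F => e (v F))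
        (atTop : Filter (Finset X)) inferInstance ?_
        (Eventually.of_forall fun F => ⟨v F, ⟨hv1 F, hvε F⟩, rfl⟩)
      rw [weakStarTop, nhds_induced, tendsto_comap_iff, tendsto_pi_nhds]
      intro x
      refine tendsto_const_nhds.congr' ?_
      filter_upwards [eventually_ge_atTop {x}] with F hF
      exact (hv0 F x (hF (Finset.mem_singleton_self x))).symm
    obtain ⟨g, hg, hglim⟩ := hE D hD hDb 0 h0
    choose f hf hfg using hg
    refine hφ f (fun n => (hf n).1) (fun x => ?_) ε hε fun n => (hf n).2
    refine (hglim x).congr fun n => ?_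
    rw [← hfg n]
  -- `N` is the annihilator of `F` in `V`
  let L : F → V →ₗ[ℝ] ℝ := fun x => (J x).toLinearMap
  let N : Submodule ℝ V := ⨅ x, (L x).ker
  have hN : ∀ f : V, f ∈ N ↔ ∀ x ∈ F, e f x = 0 := by
    intro f
    simp [N, L, Submodule.mem_iInf, hJ]
  have hsmall : ‖φ.comp N.subtypeL‖ ≤ ε := by
    refine ContinuousLinearMap.opNorm_le_of_unit_norm hε.le fun f hf => ?_
    have h1 := hF f.1 hf.le ((hN _).1 f.2)
    have h2 := hF (-f.1) (by rw [norm_neg]; exact hf.le) ((hN _).1 (N.neg_mem f.2))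
    rw [map_neg] at h2
    exact abs_le.2 ⟨by change -ε ≤ φ f.1; linarith, h1.le⟩
  obtain ⟨ψ, hψ, hψn⟩ := exists_extension_norm_eq N (φ.comp N.subtypeL)
  have hspan : (φ - ψ).toLinearMap ∈ Submodule.span ℝ (Set.range L) := by
    refine mem_span_of_iInf_ker_le_ker fun f hf => ?_
    have := hψ ⟨f, hf⟩
    simp only [LinearMap.mem_ker]
    change φ f - ψ f = 0
    rw [this]
    exact sub_self _
  let JL : X →ₗ[ℝ] V →ₗ[ℝ] ℝ := (ContinuousLinearMap.coeLM ℝ).comp J.toLinearMap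
  have hsub : Submodule.span ℝ (Set.range L) ≤ LinearMap.range JL := by
    rw [Submodule.span_le]
    rintro _ ⟨x, rfl⟩
    exact ⟨x, rfl⟩
  obtain ⟨x, hx⟩ := hsub hspan
  refine ⟨J x, ⟨x, rfl⟩, ?_⟩
  have : φ - J x = ψ := by
    ext f
    have := LinearMap.congr_fun hx f
    have h3 : J x f = φ f - ψ f := this
    rw [sub_apply, h3]; ring
  rw [dist_eq_norm, this, hψn]
  exact hsmall.trans_lt hεε

theorem exists_bound_of_pointwise_bound {V : Type*} [NormedAddCommGroup V] [NormedSpace ℝ V]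
    [CompleteSpace V] (e : V →ₗᵢ[ℝ] (X →L[ℝ] ℝ)) (R : Set X)
    (h : ∀ v, ∃ C : ℝ, ∀ x ∈ R, |e v x| ≤ C) :
    ∃ C : ℝ, 0 ≤ C ∧ ∀ x ∈ R, ∀ v, |e v x| ≤ C * ‖v‖ := by
  obtain ⟨C, hC⟩ := banach_steinhaus (g := fun x : R => e.toContinuousLinearMap.flip x.1)
    fun v => (h v).imp fun C hC x => hC x x.2
  refine ⟨max C 0, le_max_right _ _, fun x hx v => ?_⟩
  refine ((e.toContinuousLinearMap.flip x).le_opNorm v).trans ?_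
  exact mul_le_mul_of_nonneg_right ((hC ⟨x, hx⟩).trans (le_max_left _ _)) (norm_nonneg _)

/-- The theorem in terms of the embedding `evalMap e` of `X` in `ℝ^V`, where the closed subspace `Y`
is replaced by a Banach space `V` with an isometry `e` into the dual. -/
theorem isCompact_closure_range {Ω : Type*} [MeasurableSpace Ω] [CompleteSpace X]
    (hE : PropertyE X)
    {V : Type*} [NormedAddCommGroup V] [NormedSpace ℝ V] [CompleteSpace V]
    (e : V →ₗᵢ[ℝ] (X →L[ℝ] ℝ)) {c : ℝ} (hc0 : 0 < c)
    (hc : ∀ x r, 0 ≤ r → (∀ v, |e v x| ≤ r * ‖v‖) → c * ‖x‖ ≤ r)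
    (M : Set Ω → Set X)
    (hne : ∀ A : Set Ω, MeasurableSet A → (M A).Nonempty)
    (hbd : ∀ A : Set Ω, MeasurableSet A → Bornology.IsBounded (M A))
    (hcpt : ∀ A : Set Ω, MeasurableSet A →
      IsCompact (closure (evalMap e '' M A) ∩ Set.range (evalMap e)))
    (hca : ∀ v, CountablyAdditive (fun A => supportFn (e v) (M A))) :
    IsCompact (closure (evalMap e '' ⋃ (A : Set Ω) (_ : MeasurableSet A), M A)) ∧
      closure (evalMap e '' ⋃ (A : Set Ω) (_ : MeasurableSet A), M A) ⊆
        Set.range (evalMap e) := by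
  classical
  set R : Set X := ⋃ (A : Set Ω) (_ : MeasurableSet A), M A with hR
  obtain ⟨C, hC0, hC⟩ : ∃ C : ℝ, 0 ≤ C ∧ ∀ x ∈ R, ∀ v, |e v x| ≤ C * ‖v‖ := by
    obtain ⟨C, hC0, hC⟩ := exists_bound_of_pointwise_bound e R (by
      intro f
      obtain ⟨ν, hν⟩ := exists_signedMeasure _ (hca f)
      obtain ⟨ν', hν'⟩ := exists_signedMeasure _ (hca (-f))
      refine ⟨ν.totalVariation.real Set.univ + ν'.totalVariation.real Set.univ, fun x hx => ?_⟩
      obtain ⟨A, hA, hx⟩ := Set.mem_iUnion₂.1 hx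
      have h1 := (le_abs_self _).trans ((ν.norm_le_totalVariation A).trans
        (measureReal_mono (Set.subset_univ A)))
      have h2 := (le_abs_self _).trans ((ν'.norm_le_totalVariation A).trans
        (measureReal_mono (Set.subset_univ A)))
      rw [hν A hA] at h1
      rw [hν' A hA] at h2
      have h3 := le_supportFn (hbd A hA) (e f) hx
      have h4 := le_supportFn (hbd A hA) (e (-f)) hx
      rw [map_neg, neg_apply] at h4
      rw [map_neg] at h2
      have := measureReal_nonneg (μ := ν.totalVariation) (s := Set.univ)
      have := measureReal_nonneg (μ := ν'.totalVariation) (s := Set.univ)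
      change |e f x| ≤ _
      rw [abs_le]
      constructor <;> linarith)
    exact ⟨C, hC0, hC⟩
  have hbound : ∀ z ∈ closure (evalMap e '' R), ∀ f : V, |z f| ≤ C * ‖f‖ :=
    fun z hz f => abs_le_of_mem_closure_evalMap hC hz f
  have hcompact : IsCompact (closure (evalMap e '' R)) := by
    refine (isCompact_univ_pi fun f : V =>
      isCompact_Icc (a := -(C * ‖f‖)) (b := C * ‖f‖)).of_isClosed_subset isClosed_closure
      fun z hz f _ => abs_le.1 (hbound z hz f)
  have hrange : closure (evalMap e '' R) ⊆ Set.range (evalMap e) := by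
    intro z hz
    obtain ⟨W, hWR, hWz⟩ := mem_closure_iff_ultrafilter.1 hz
    -- pull the ultrafilter back to `X`
    obtain ⟨U, hUR, hUW⟩ : ∃ U : Ultrafilter X, R ∈ U ∧ U.map (evalMap e) = W :=
      ⟨Ultrafilter.ofComapInfPrincipal hWR, Ultrafilter.ofComapInfPrincipal_mem hWR,
        Ultrafilter.ofComapInfPrincipal_eq_of_map hWR⟩
    have hlim : ∀ f : V, Tendsto (fun x => e f x) U (𝓝 (z f)) := by
      intro f
      have : Tendsto (evalMap e) U (𝓝 z) := by
        rw [Tendsto, ← Ultrafilter.coe_map, hUW]; exact hWz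
      exact tendsto_pi_nhds.1 this f
    let φ : V →ₗ[ℝ] ℝ :=
      { toFun := z
        map_add' := fun f g => tendsto_nhds_unique (hlim (f + g)) (by
          simpa using (hlim f).add (hlim g))
        map_smul' := fun r f => tendsto_nhds_unique (hlim (r • f)) (by
          simpa using (hlim f).const_mul r) }
    obtain ⟨x, hx⟩ := exists_eq_eval_of_no_null_sequence hE e hc0 hc φ
      (C := C) (fun f => hbound z hz f)
      fun f hf1 hf0 ε hε hfε => no_null_sequence e M hne hbd hcpt hca hC0
        (fun A hA x hx => hC x (Set.mem_biUnion hA hx)) U hUR φ hlim f hf1 hf0 hε hfε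
    exact ⟨x, funext fun f => (hx f).symm⟩
  exact ⟨hcompact, hrange⟩

/-! ### Transfer to the topology `σ(X, Y)` -/

/-- `σ(X, Y)` is induced by the evaluation map into `ℝ^Y`, so relative compactness can be read off
from the image. -/
theorem isCompact_sigmaTop_closure_iff (Y : Submodule ℝ (X →L[ℝ] ℝ)) (S : Set X) :
    @IsCompact X (sigmaTop (Y : Set (X →L[ℝ] ℝ)))
      (@closure X (sigmaTop (Y : Set (X →L[ℝ] ℝ))) S) ↔
    IsCompact (closure (evalMap (fun y : Y => (y : X →L[ℝ] ℝ)) '' S) ∩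
      Set.range (evalMap (fun y : Y => (y : X →L[ℝ] ℝ)))) := by
  have hind : @Topology.IsInducing X (Y → ℝ) (sigmaTop (Y : Set (X →L[ℝ] ℝ))) _
      (evalMap (fun y : Y => (y : X →L[ℝ] ℝ))) :=
    @Topology.IsInducing.mk X (Y → ℝ) (sigmaTop (Y : Set (X →L[ℝ] ℝ))) _ _ rfl
  rw [@Topology.IsInducing.isCompact_iff X (Y → ℝ) (sigmaTop (Y : Set (X →L[ℝ] ℝ))) _ _ _ hind,
    @Topology.IsInducing.closure_eq_preimage_closure_image X (Y → ℝ) _ _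
      (sigmaTop (Y : Set (X →L[ℝ] ℝ))) hind S, Set.image_preimage_eq_inter_range]

theorem norming_bound {Y : Submodule ℝ (X →L[ℝ] ℝ)} {c : ℝ}
    (hc : ∀ x : X, c * ‖x‖ ≤ sSup ((fun f : X →L[ℝ] ℝ => |f x|) ''
      ((Y : Set (X →L[ℝ] ℝ)) ∩ Metric.closedBall 0 1)))
    (x : X) (r : ℝ) (hr : 0 ≤ r) (h : ∀ y : Y, |Y.subtypeₗᵢ y x| ≤ r * ‖y‖) :
    c * ‖x‖ ≤ r := by
  refine (hc x).trans (Real.sSup_le ?_ hr)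
  rintro _ ⟨f, hf, rfl⟩
  have h1 : |f x| ≤ r * ‖f‖ := h ⟨f, hf.1⟩
  exact h1.trans (mul_le_of_le_one_right hr (mem_closedBall_zero_iff.1 hf.2))

end Support

/-- Let `X` be a Banach space with property (E) and `Y ⊆ X*` a
norming norm-closed linear subspace. If `M : Σ → b(X)` has relatively `σ(X,Y)`-compact
values and `s(x*, M)` is countably additive for every `x* ∈ Y`, then `⋃_{A ∈ Σ} M(A)`
is relatively `σ(X,Y)`-compact. -/
theorem statement14 {Ω X : Type*} [MeasurableSpace Ω]
    [NormedAddCommGroup X] [NormedSpace ℝ X] [CompleteSpace X]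
    (hE : PropertyE X)
    (Y : Submodule ℝ (X →L[ℝ] ℝ))
    (hYnorming : IsNorming Y)
    (hYclosed : IsClosed (Y : Set (X →L[ℝ] ℝ)))
    (M : Set Ω → Set X)
    (hne : ∀ A : Set Ω, MeasurableSet A → (M A).Nonempty)
    (hbd : ∀ A : Set Ω, MeasurableSet A → Bornology.IsBounded (M A))
    (hcpt : ∀ A : Set Ω, MeasurableSet A →
      @IsCompact X (sigmaTop (Y : Set (X →L[ℝ] ℝ)))
        (@closure X (sigmaTop (Y : Set (X →L[ℝ] ℝ))) (M A)))
    (hca : ∀ f ∈ Y, CountablyAdditive (fun A => supportFn f (M A))) :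
    @IsCompact X (sigmaTop (Y : Set (X →L[ℝ] ℝ)))
      (@closure X (sigmaTop (Y : Set (X →L[ℝ] ℝ)))
        (⋃ (A : Set Ω) (_ : MeasurableSet A), M A)) := by
  obtain ⟨c, hc0, hc⟩ := hYnorming
  have hcomplete : CompleteSpace Y := hYclosed.completeSpace_coe
  -- the instances on `Y` are given explicitly: their synthesis is very slow for subspaces of `X*`
  obtain ⟨h1, h2⟩ := @isCompact_closure_range X _ _ Ω _ _ hE Y Y.normedAddCommGroup Y.normedSpace
    hcomplete Y.subtypeₗᵢ c hc0 (norming_bound hc)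
    M hne hbd (fun A hA => (isCompact_sigmaTop_closure_iff Y _).1 (hcpt A hA))
    (fun f => hca f f.2)
  rw [← Set.inter_eq_left.2 h2] at h1
  exact (isCompact_sigmaTop_closure_iff Y _).2 h1
end

section
/- Let E be a real linear space, let C_1 and C_2 be convex non-empty subsets of E, and let x be an extreme point of C_1 + C_2. Then there exist unique x_1 ∈ C_1 and x_2 ∈ C_2 such that x = x_1 + x_2; moreover, x_1 is an extreme point of C_1 and x_2 is an extreme point of C_2. -/
/-!
If `x = a + b = c + d` with `a, c ∈ C₁` and `b, d ∈ C₂`, then `x` is the midpoint of `a + d` and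
`c + b`, both in `C₁ + C₂`, so extremality gives `a + d = x = a + b`, i.e. `d = b`, and then `a = c`.
If `x₁` lies in the open segment from `u` to `v` in `C₁`, translating by `x₂` puts `x` in the open
segment from `u + x₂` to `v + x₂` in `C₁ + C₂`, so `u + x₂ = x` and `u = x₁`;
the argument for `x₂` is symmetric.
-/

open Pointwise

/-- Let `E` be a real linear space, `C₁, C₂ ⊆ E` convex non-empty
sets, and `x` an extreme point of `C₁ + C₂`. Then there is a unique pair
`(x₁, x₂) ∈ C₁ × C₂` with `x = x₁ + x₂`; moreover any such `x₁` is an extreme point of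
`C₁` and any such `x₂` is an extreme point of `C₂`. -/
theorem statement17 {E : Type*} [AddCommGroup E] [Module ℝ E]
    (C₁ C₂ : Set E) (h₁ : C₁.Nonempty) (h₂ : C₂.Nonempty)
    (hc₁ : Convex ℝ C₁) (hc₂ : Convex ℝ C₂)
    (x : E) (hx : x ∈ (C₁ + C₂).extremePoints ℝ) :
    (∃! p : E × E, p.1 ∈ C₁ ∧ p.2 ∈ C₂ ∧ x = p.1 + p.2) ∧
      ∀ x₁ ∈ C₁, ∀ x₂ ∈ C₂, x = x₁ + x₂ →
        x₁ ∈ C₁.extremePoints ℝ ∧ x₂ ∈ C₂.extremePoints ℝ := by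
  rw [mem_extremePoints_iff_left] at hx
  obtain ⟨⟨a, ha, b, hb, hab⟩, hext⟩ := hx
  refine ⟨⟨(a, b), ⟨ha, hb, hab.symm⟩, ?_⟩, ?_⟩
  · rintro ⟨c, d⟩ ⟨hc, hd, hcd⟩
    dsimp only at hc hd hcd hab
    have had : a + d = x := by
      refine hext _ (Set.add_mem_add ha hd) _ (Set.add_mem_add hc hb)
        ⟨1 / 2, 1 / 2, by norm_num, by norm_num, by norm_num, ?_⟩
      have hsum : (a + d) + (c + b) = x + x := by
        nth_rewrite 1 [← hab]
        rw [hcd]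
        abel
      rw [← smul_add, hsum, ← two_smul ℝ x, smul_smul]
      norm_num
    have hdb : d = b := add_left_cancel (had.trans hab.symm)
    subst hdb
    have hca : c = a := add_right_cancel (hcd.symm.trans hab.symm)
    rw [hca]
  · rintro x₁ hx₁ x₂ hx₂ rfl
    simp only [mem_extremePoints_iff_left]
    refine ⟨⟨hx₁, fun u hu v hv huv => ?_⟩, ⟨hx₂, fun u hu v hv huv => ?_⟩⟩
    · refine add_right_cancel (hext _ (Set.add_mem_add hu hx₂) _ (Set.add_mem_add hv hx₂) ?_)
      obtain ⟨s, t, hs, ht, hst, rfl⟩ := huv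
      refine ⟨s, t, hs, ht, hst, ?_⟩
      rw [smul_add, smul_add, add_add_add_comm, ← add_smul, hst, one_smul]
    · refine add_left_cancel (hext _ (Set.add_mem_add hx₁ hu) _ (Set.add_mem_add hx₁ hv) ?_)
      obtain ⟨s, t, hs, ht, hst, rfl⟩ := huv
      refine ⟨s, t, hs, ht, hst, ?_⟩
      rw [smul_add, smul_add, add_add_add_comm, ← add_smul, hst, one_smul]
end
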